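/- Let Ã be a symmetric N×N real matrix, W an H×H real matrix, V an F×H real matrix, and X an N×F real matrix, and suppose K = ρ(Ã) · ‖W‖₂ < 1. Then the reservoir map Φ(M) = tanh(Ã M W + X V) has a unique fixed point H* ∈ ℝ^{N×H}, i.e., there exists exactly one N×H real matrix H* with Φ(H*) = H*. -/

import Mathlib

noncomputable def frobNorm {m n : Type*} [Fintype m] [Fintype n]
    (M : Matrix m n ℝ) : ℝ :=
  Real.sqrt (∑ i, ∑ j, (M i j) ^ 2)

noncomputable def specNorm {m n : ℕ} (M : Matrix (Fin m) (Fin n) ℝ) : ℝ :=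
  ‖LinearMap.toContinuousLinearMap (Matrix.toEuclideanLin M)‖

noncomputable def specRad {n : ℕ} (A : Matrix (Fin n) (Fin n) ℝ)
    (hA : A.IsHermitian) : ℝ :=
  ⨆ i, |hA.eigenvalues i|

noncomputable def mtanh {m n : Type*} (M : Matrix m n ℝ) : Matrix m n ℝ :=
  Matrix.of fun i j => Real.tanh (M i j)

noncomputable def resMap {N F Hd : ℕ} (Atil : Matrix (Fin N) (Fin N) ℝ)
    (W : Matrix (Fin Hd) (Fin Hd) ℝ) (V : Matrix (Fin F) (Fin Hd) ℝ)
    (X : Matrix (Fin N) (Fin F) ℝ) (M : Matrix (Fin N) (Fin Hd) ℝ) :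
    Matrix (Fin N) (Fin Hd) ℝ :=
  mtanh (Atil * M * W + X * V)

theorem aux_tanh (x y : ℝ) : |Real.tanh x - Real.tanh y| ≤ |x - y| := by
  have hd : ∀ z : ℝ, HasDerivAt Real.tanh (1 / Real.cosh z ^ 2) z := by
    intro z
    have h := (Real.hasDerivAt_sinh z).div (Real.hasDerivAt_cosh z) (Real.cosh_pos z).ne'
    have e : Real.tanh = Real.sinh / Real.cosh := by
      ext t; simp [Real.tanh_eq_sinh_div_cosh]
    rw [e]
    have e2 : Real.cosh z * Real.cosh z - Real.sinh z * Real.sinh z = 1 := by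
      have := Real.cosh_sq z
      nlinarith [this]
    rw [e2] at h
    exact h
  have hl : LipschitzWith 1 Real.tanh := by
    apply lipschitzWith_of_nnnorm_deriv_le (fun z => (hd z).differentiableAt)
    intro z
    rw [(hd z).deriv, ← NNReal.coe_le_coe, coe_nnnorm, Real.norm_eq_abs, abs_of_nonneg (by positivity)]
    have := Real.one_le_cosh z
    rw [NNReal.coe_one, div_le_one (by positivity)]
    nlinarith
  simpa [Real.dist_eq] using hl.dist_le_mul x y

open scoped Matrix.Norms.L2Operator in
theorem aux_spec {n : ℕ} (A : Matrix (Fin n) (Fin n) ℝ) (hA : A.IsHermitian) :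
    specNorm A ≤ specRad A hA := by
  change ‖A‖ ≤ _
  have h := hA.spectral_theorem
  rw [Unitary.conjStarAlgAut_apply] at h
  have h2 : ‖A‖ = ‖(Matrix.diagonal (RCLike.ofReal ∘ hA.eigenvalues) : Matrix (Fin n) (Fin n) ℝ)‖ := by
    conv_lhs => rw [h]
    rw [← Unitary.coe_star, CStarRing.norm_mul_coe_unitary, CStarRing.norm_coe_unitary_mul]
  rw [h2, Matrix.l2_opNorm_diagonal]
  have h0 : 0 ≤ specRad A hA := Real.iSup_nonneg fun i => abs_nonneg _
  rw [pi_norm_le_iff_of_nonneg h0]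
  intro i
  exact le_ciSup (f := fun i => |hA.eigenvalues i|) (Set.finite_range _).bddAbove i

open scoped Matrix.Norms.L2Operator in
theorem aux_tr {n : ℕ} (A : Matrix (Fin n) (Fin n) ℝ) : specNorm A.transpose = specNorm A := by
  have := Matrix.l2_opNorm_conjTranspose A
  rwa [Matrix.conjTranspose_eq_transpose_of_trivial] at this

open scoped Matrix.Norms.L2Operator in
theorem aux_vec {n : ℕ} (A : Matrix (Fin n) (Fin n) ℝ) (v : Fin n → ℝ) :
    ∑ i, (A.mulVec v i) ^ 2 ≤ specNorm A ^ 2 * ∑ i, v i ^ 2 := by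
  have h := Matrix.l2_opNorm_mulVec A (WithLp.toLp 2 v)
  have h2 := pow_le_pow_left₀ (norm_nonneg _) h 2
  rw [mul_pow, EuclideanSpace.norm_sq_eq, EuclideanSpace.norm_sq_eq] at h2
  change _ ≤ ‖A‖ ^ 2 * _
  simpa using h2

theorem aux_left {n m : ℕ} (A : Matrix (Fin n) (Fin n) ℝ) (M : Matrix (Fin n) (Fin m) ℝ) :
    ∑ i, ∑ j, ((A * M) i j) ^ 2 ≤ specNorm A ^ 2 * ∑ i, ∑ j, M i j ^ 2 := by
  rw [Finset.sum_comm, Finset.sum_comm (f := fun i j => M i j ^ 2), Finset.mul_sum]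
  exact Finset.sum_le_sum fun j _ => aux_vec A (fun i => M i j)

theorem aux_right {n m : ℕ} (W : Matrix (Fin m) (Fin m) ℝ) (M : Matrix (Fin n) (Fin m) ℝ) :
    ∑ i, ∑ j, ((M * W) i j) ^ 2 ≤ specNorm W ^ 2 * ∑ i, ∑ j, M i j ^ 2 := by
  have h := aux_left W.transpose M.transpose
  rw [aux_tr, ← Matrix.transpose_mul, Finset.sum_comm,
    Finset.sum_comm (f := fun i j => M.transpose i j ^ 2)] at h
  exact h

theorem aux_contr {N F Hd : ℕ}
    (Atil : Matrix (Fin N) (Fin N) ℝ) (hA : Atil.IsHermitian)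
    (W : Matrix (Fin Hd) (Fin Hd) ℝ) (V : Matrix (Fin F) (Fin Hd) ℝ)
    (X : Matrix (Fin N) (Fin F) ℝ) (P Q : Matrix (Fin N) (Fin Hd) ℝ) :
    ∑ i, ∑ j, (resMap Atil W V X P i j - resMap Atil W V X Q i j) ^ 2 ≤
      (specRad Atil hA * specNorm W) ^ 2 * ∑ i, ∑ j, (P i j - Q i j) ^ 2 := by
  have hs : 0 ≤ specNorm Atil := norm_nonneg _
  have h0 : 0 ≤ ∑ i, ∑ j, (P i j - Q i j) ^ 2 := by positivity
  calc _ ≤ ∑ i, ∑ j, ((Atil * (P - Q) * W) i j) ^ 2 := by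
        refine Finset.sum_le_sum fun i _ => Finset.sum_le_sum fun j _ => ?_
        apply sq_le_sq.mpr
        refine (aux_tanh _ _).trans (le_of_eq ?_)
        simp [Matrix.mul_sub, Matrix.sub_mul]
    _ ≤ specNorm W ^ 2 * (specNorm Atil ^ 2 * ∑ i, ∑ j, (P i j - Q i j) ^ 2) := by
        refine (aux_right W _).trans ?_
        gcongr
        exact aux_left Atil (P - Q)
    _ ≤ specNorm W ^ 2 * (specRad Atil hA ^ 2 * ∑ i, ∑ j, (P i j - Q i j) ^ 2) := by
        gcongr
        exact aux_spec Atil hA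
    _ = _ := by ring

/-- If K = ρ(Ã)·‖W‖₂ < 1 then the reservoir map has a unique fixed point. -/
theorem reservoir_map_existsUnique_fixedPoint {N F Hd : ℕ}
    (Atil : Matrix (Fin N) (Fin N) ℝ) (hA : Atil.IsHermitian)
    (W : Matrix (Fin Hd) (Fin Hd) ℝ) (V : Matrix (Fin F) (Fin Hd) ℝ)
    (X : Matrix (Fin N) (Fin F) ℝ)
    (hK : specRad Atil hA * specNorm W < 1) :
    ∃! Hstar : Matrix (Fin N) (Fin Hd) ℝ, resMap Atil W V X Hstar = Hstar := by
  set K := specRad Atil hA * specNorm W with hKd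
  have hK0 : 0 ≤ K := mul_nonneg (Real.iSup_nonneg fun i => abs_nonneg _) (norm_nonneg _)
  let tm : EuclideanSpace ℝ (Fin N × Fin Hd) → Matrix (Fin N) (Fin Hd) ℝ :=
    fun x => Matrix.of fun i j => x (i, j)
  let fr : Matrix (Fin N) (Fin Hd) ℝ → EuclideanSpace ℝ (Fin N × Fin Hd) :=
    fun M => WithLp.toLp 2 fun p => M p.1 p.2
  have htf : ∀ M, tm (fr M) = M := fun M => rfl
  have hft : ∀ x, fr (tm x) = x := fun x => rfl
  let f := fun x => fr (resMap Atil W V X (tm x))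
  have hc : ContractingWith ⟨K, hK0⟩ f := by
    refine ⟨by exact_mod_cast hK, LipschitzWith.of_dist_le_mul fun x y => ?_⟩
    refine (sq_le_sq₀ dist_nonneg (mul_nonneg hK0 dist_nonneg)).mp ?_
    rw [mul_pow, EuclideanSpace.dist_sq_eq, EuclideanSpace.dist_sq_eq]
    simp only [Real.dist_eq, sq_abs, Fintype.sum_prod_type]
    exact aux_contr Atil hA W V X (tm x) (tm y)
  refine ⟨tm (hc.fixedPoint f), ?_, fun M hM => ?_⟩
  · have := hc.fixedPoint_isFixedPt
    exact congrArg tm this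
  · have : Function.IsFixedPt f (fr M) := congrArg fr hM
    rw [← hc.fixedPoint_unique this, htf]
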